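/- For all n ≥ 0, the number of walks on the slit plane of length 2n+1 ending at (0,1) equals 4ⁿ·Cₙ, where Cₙ = binom(2n,n)/(n+1) is the n-th Catalan number; and walks on the slit plane ending at (0,1) of even length do not exist, i.e. a_{0,1}(2n) = 0. -/

import Mathlib

open Filter

/-- The forbidden half-line `H = {(k,0) : k ≤ 0}`. -/
def slitH : Set (ℤ × ℤ) := {p : ℤ × ℤ | p.2 = 0 ∧ p.1 ≤ 0}

/-- The four steps of the ordinary square lattice. -/
def sqSteps : Set (ℤ × ℤ) := {(1,0), (-1,0), (0,1), (0,-1)}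

/-- The four diagonal steps. -/
def diagSteps : Set (ℤ × ℤ) := {(1,1), (1,-1), (-1,1), (-1,-1)}

/-- `w : Fin (n+1) → ℤ × ℤ` is a walk on the slit plane with steps in `A`. -/
def IsSlitWalk (A : Set (ℤ × ℤ)) (n : ℕ) (w : Fin (n+1) → ℤ × ℤ) : Prop :=
  w 0 = (0,0) ∧ (∀ m : Fin n, w m.succ - w m.castSucc ∈ A) ∧
    ∀ m : Fin (n+1), 1 ≤ (m : ℕ) → w m ∉ slitH

/-- `a_{i,j}(n)`: the number of walks on the slit plane of length `n` ending at `(i,j)`. -/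
noncomputable def slitCount (A : Set (ℤ × ℤ)) (i j : ℤ) (n : ℕ) : ℕ :=
  Nat.card {w : Fin (n+1) → ℤ × ℤ // IsSlitWalk A n w ∧ w (Fin.last n) = (i, j)}


open LaurentPolynomial

section SlitProof

/-! ### Recurrence for the number of walks -/

/-- The walks counted by `slitCount`. -/
abbrev SlitWk (n : ℕ) (p : ℤ × ℤ) : Type :=
  {w : Fin (n+1) → ℤ × ℤ // IsSlitWalk sqSteps n w ∧ w (Fin.last n) = p}

/-- An enumeration of the steps. -/
def slitSt : Fin 4 → ℤ × ℤ := ![(1,0), (-1,0), (0,1), (0,-1)]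

lemma slitSt_inj : Function.Injective slitSt := by
  intro a b h
  fin_cases a <;> fin_cases b <;> simp_all [slitSt]

lemma slitSt_mem (k : Fin 4) : slitSt k ∈ sqSteps := by
  fin_cases k <;> simp [slitSt, sqSteps]

lemma exists_slitSt {s : ℤ × ℤ} (h : s ∈ sqSteps) : ∃ k, slitSt k = s := by
  simp only [sqSteps, Set.mem_insert_iff, Set.mem_singleton_iff] at h
  rcases h with h | h | h | h
  · exact ⟨0, h.symm⟩
  · exact ⟨1, h.symm⟩
  · exact ⟨2, h.symm⟩
  · exact ⟨3, h.symm⟩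

/-- Append a last point to a walk. -/
def slitExt (n : ℕ) (p : ℤ × ℤ) (hp : p ∉ slitH) (x : Σ k : Fin 4, SlitWk n (p - slitSt k)) :
    SlitWk (n+1) p :=
  ⟨Fin.snoc (α := fun _ => ℤ × ℤ) x.2.1 p, by
    obtain ⟨k, w, ⟨h0, h1, h2⟩, h3⟩ := x
    refine ⟨⟨?_, ?_, ?_⟩, by simp⟩
    · have : (0 : Fin (n+2)) = Fin.castSucc 0 := rfl
      rw [this, Fin.snoc_castSucc]; exact h0
    · intro m
      induction m using Fin.lastCases with
      | last =>
        rw [Fin.succ_last, Fin.snoc_last, Fin.snoc_castSucc]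
        simp only [h3]
        simpa using slitSt_mem k
      | cast m =>
        rw [Fin.succ_castSucc, Fin.snoc_castSucc, Fin.snoc_castSucc]
        exact h1 m
    · intro m hm
      induction m using Fin.lastCases with
      | last => rw [Fin.snoc_last]; exact hp
      | cast m =>
        rw [Fin.snoc_castSucc]
        exact h2 m (by simpa using hm)⟩

lemma slitExt_bij (n : ℕ) (p : ℤ × ℤ) (hp : p ∉ slitH) : Function.Bijective (slitExt n p hp) := by
  constructor
  · rintro ⟨k, w, hw⟩ ⟨k', w', hw'⟩ h
    have h' := congrArg Subtype.val h
    simp only [slitExt] at h'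
    have hww : w = w' := by
      funext m
      have := congrFun h' m.castSucc
      simpa [Fin.snoc_castSucc] using this
    subst hww
    have : p - slitSt k = p - slitSt k' := by rw [← hw.2, ← hw'.2]
    have hk : k = k' := slitSt_inj (by simpa using this)
    subst hk
    rfl
  · rintro ⟨w, ⟨h0, h1, h2⟩, h3⟩
    have hl := h1 (Fin.last n)
    rw [Fin.succ_last, h3] at hl
    obtain ⟨k, hk⟩ := exists_slitSt hl
    refine ⟨⟨k, fun m => w m.castSucc, ⟨h0, fun m => ?_, fun m hm => ?_⟩, ?_⟩, ?_⟩
    · have := h1 m.castSucc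
      rwa [Fin.succ_castSucc] at this
    · exact h2 _ (by simpa using hm)
    · rw [hk]; simp
    · apply Subtype.ext
      funext m
      simp only [slitExt]
      induction m using Fin.lastCases with
      | last => rw [Fin.snoc_last]; exact h3.symm
      | cast m => rw [Fin.snoc_castSucc]

lemma slitWk_empty (n : ℕ) (p : ℤ × ℤ) (hp : p ∈ slitH) : IsEmpty (SlitWk (n+1) p) :=
  ⟨fun w => w.2.1.2.2 (Fin.last _) (by simp) (by rw [w.2.2]; exact hp)⟩

instance slitWk_finite (n : ℕ) (p : ℤ × ℤ) : Finite (SlitWk n p) := by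
  induction n generalizing p with
  | zero =>
    have : Subsingleton (SlitWk 0 p) := ⟨fun a b => Subtype.ext (by
      funext m
      have : m = 0 := Subsingleton.elim (α := Fin 1) _ _
      rw [this, a.2.1.1, b.2.1.1])⟩
    infer_instance
  | succ n ih =>
    by_cases hp : p ∈ slitH
    · have := slitWk_empty n p hp
      infer_instance
    · exact Finite.of_surjective _ (slitExt_bij n p hp).2

lemma slitCount_zero (i j : ℤ) : slitCount sqSteps i j 0 = if i = 0 ∧ j = 0 then 1 else 0 := by
  unfold slitCount
  split_ifs with h
  · rw [Nat.card_eq_one_iff_unique]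
    refine ⟨⟨fun a b => Subtype.ext ?_⟩, ⟨⟨fun _ => (0,0), ⟨rfl, fun m => m.elim0, ?_⟩, ?_⟩⟩⟩
    · funext m
      have : m = 0 := Subsingleton.elim (α := Fin 1) _ _
      rw [this, a.2.1.1, b.2.1.1]
    · intro m hm; omega
    · simp [h.1, h.2]
  · have : IsEmpty {w : Fin (0+1) → ℤ × ℤ // IsSlitWalk sqSteps 0 w ∧ w (Fin.last 0) = (i, j)} := by
      refine ⟨fun w => h ?_⟩
      have h1 := w.2.1.1
      have h2 := h1.symm.trans w.2.2
      simpa [eq_comm] using h2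
    exact Nat.card_of_isEmpty

lemma slitCount_succ_mem (i j : ℤ) (n : ℕ) (h : j = 0 ∧ i ≤ 0) :
    slitCount sqSteps i j (n+1) = 0 := by
  have := slitWk_empty n (i,j) h
  exact Nat.card_of_isEmpty

lemma slitCount_succ (i j : ℤ) (n : ℕ) (h : ¬ (j = 0 ∧ i ≤ 0)) :
    slitCount sqSteps i j (n+1) = slitCount sqSteps (i-1) j n + slitCount sqSteps (i+1) j n
      + slitCount sqSteps i (j-1) n + slitCount sqSteps i (j+1) n := by
  have := Nat.card_congr (Equiv.ofBijective _ (slitExt_bij n (i,j) h))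
  unfold slitCount
  rw [← this, Nat.card_sigma, Fin.sum_univ_four]
  simp [slitSt, SlitWk]

lemma slitCount_parity (n : ℕ) (i j : ℤ) (h : (i + j + n) % 2 = 1) :
    slitCount sqSteps i j n = 0 := by
  induction n generalizing i j with
  | zero => rw [slitCount_zero, if_neg]; rintro ⟨rfl, rfl⟩; simp at h
  | succ n ih =>
    by_cases hm : j = 0 ∧ i ≤ 0
    · exact slitCount_succ_mem i j n hm
    · rw [slitCount_succ i j n hm, ih, ih, ih, ih] <;> push_cast at h <;> omega

/-! ### Generating functions -/

/-- Laurent polynomials in `x` over the rationals. -/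
abbrev SLQ := LaurentPolynomial ℚ

/-- The part with positive exponents. -/
noncomputable def slitPos (f : SLQ) : SLQ := .ofCoeff (f.coeff.filter (0 < ·))

/-- One unconstrained step. -/
noncomputable def slitG (f : ℤ → SLQ) (j : ℤ) : SLQ :=
  (T 1 + T (-1)) * f j + (f (j-1) + f (j+1))

/-- `∑ᵢ a_{i,j}(n) xⁱ`. -/
noncomputable def slitF : ℕ → ℤ → SLQ
  | 0 => fun j => if j = 0 then 1 else 0
  | n+1 => fun j => if j = 0 then slitPos (slitG (slitF n) 0) else slitG (slitF n) j

/-- First hits of the half line. -/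
noncomputable def slitTau : ℕ → SLQ
  | 0 => 0
  | n+1 => slitG (slitF n) 0 - slitF (n+1) 0

lemma coeff_T_mul (k i : ℤ) (f : SLQ) : (T k * f).coeff i = f.coeff (i - k) := by
  have h := AddMonoidAlgebra.coeff_single_mul_add f (1 : ℚ) k (i - k)
  rw [add_sub_cancel, one_mul] at h
  exact h

lemma slitG_coeff (f : ℤ → SLQ) (i j : ℤ) : (slitG f j).coeff i =
    (f j).coeff (i-1) + (f j).coeff (i+1) + (f (j-1)).coeff i + (f (j+1)).coeff i := by
  simp only [slitG, add_mul, AddMonoidAlgebra.coeff_add, Finsupp.add_apply, coeff_T_mul]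
  ring_nf

lemma slitPos_coeff (f : SLQ) (i : ℤ) :
    (slitPos f).coeff i = if 0 < i then f.coeff i else 0 := by
  simp [slitPos, Finsupp.filter_apply]

lemma slitF_coeff (n : ℕ) (i j : ℤ) : (slitF n j).coeff i = slitCount sqSteps i j n := by
  induction n generalizing i j with
  | zero =>
    rw [slitCount_zero]
    by_cases hj : j = 0
    · simp only [slitF, hj, if_true]
      rw [← T_zero, T_apply]
      simp [eq_comm]
    · simp [slitF, hj]
  | succ n ih =>
    by_cases hj : j = 0
    · by_cases hi : i ≤ 0
      · rw [slitCount_succ_mem i j n ⟨hj, hi⟩]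
        simp [slitF, hj, slitPos_coeff, hi]
      · rw [slitCount_succ i j n (by tauto)]
        simp [slitF, hj, slitPos_coeff, not_le.1 hi, slitG_coeff, ih]
    · rw [slitCount_succ i j n (by tauto)]
      simp [slitF, hj, slitG_coeff, ih]

lemma slitF_symm (n : ℕ) (j : ℤ) : slitF n (-j) = slitF n j := by
  induction n generalizing j with
  | zero => simp [slitF]
  | succ n ih =>
    have : slitG (slitF n) (-j) = slitG (slitF n) j := by
      unfold slitG
      rw [ih, show -j - 1 = -(j+1) by ring, show -j + 1 = -(j-1) by ring, ih, ih]
      ring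
    simp [slitF, this]

lemma slitF_zero_of_lt (n : ℕ) (j : ℕ) (h : n < j) : slitF n (j : ℤ) = 0 := by
  induction n generalizing j with
  | zero => simp [slitF]; omega
  | succ n ih =>
    obtain ⟨k, rfl⟩ : ∃ k, j = k + 1 := ⟨j - 1, by omega⟩
    have h1 := ih k (by omega)
    have h2 := ih (k+1) (by omega)
    have h3 := ih (k+2) (by omega)
    push_cast at h1 h2 h3 ⊢
    have : ((k:ℤ)+1 ≠ 0) := by omega
    simp only [slitF, this, if_false, slitG]
    rw [h2, show (k:ℤ)+1-1 = k by ring, show (k:ℤ)+1+1 = k+2 by ring, h1, h3]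
    simp

end SlitProof

section SlitSeries

open PowerSeries

/-- Generating function of the walks ending at height `j`. -/
noncomputable def slitS (j : ℤ) : PowerSeries SLQ := PowerSeries.mk (fun n => slitF n j)

/-- Generating function of the first hits. -/
noncomputable def slitTT : PowerSeries SLQ := PowerSeries.mk slitTau

/-- The polynomial `x + 1/x`. -/
noncomputable def slitXX : PowerSeries SLQ := PowerSeries.C (T 1 + T (-1))

lemma coeff_slitXX_mul (n : ℕ) (f : PowerSeries SLQ) :
    coeff n (slitXX * f) = (T 1 + T (-1)) * coeff n f := by
  rw [slitXX, coeff_C_mul]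

lemma slitS_eq (j : ℤ) (hj : j ≠ 0) :
    slitS j = X * (slitXX * slitS j + (slitS (j-1) + slitS (j+1))) := by
  ext1 n
  cases n with
  | zero => simp [slitS, slitF, hj]
  | succ n =>
    rw [coeff_succ_X_mul]
    simp only [slitS, map_add, coeff_slitXX_mul, coeff_mk]
    simp [slitF, hj, slitG]

lemma slitS_eq_zero :
    slitS 0 = 1 + X * (slitXX * slitS 0 + (slitS 1 + slitS 1)) - slitTT := by
  ext1 n
  cases n with
  | zero => simp [slitS, slitF, slitTT, slitTau]
  | succ n =>
    rw [map_sub, map_add, coeff_succ_X_mul]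
    have := slitF_symm n 1
    simp only [slitS, map_add, coeff_slitXX_mul, coeff_mk, slitTT, slitTau, slitG, coeff_one]
    simp [this]

lemma slit_quadratic : X * (slitS 1 ^ 2 + slitS 0 ^ 2) =
    (1 - X * slitXX) * slitS 0 * slitS 1 := by
  set Q : ℕ → PowerSeries SLQ := fun j => X * (slitS ((j:ℤ)+1) ^ 2 + slitS j ^ 2) -
    (1 - X * slitXX) * slitS j * slitS ((j:ℤ)+1) with hQ
  have hstep : ∀ j, Q (j+1) = Q j := by
    intro j
    have h := slitS_eq ((j:ℤ)+1) (by omega)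
    rw [show (j:ℤ)+1-1 = j by ring] at h
    simp only [hQ]
    push_cast
    linear_combination (-(slitS ((j:ℤ)+1+1) - slitS j)) * h
  have hQ0 : ∀ j, Q j = Q 0 := by
    intro j
    induction j with
    | zero => rfl
    | succ j ih => rw [hstep, ih]
  have hdvd : ∀ j : ℕ, X ^ j ∣ slitS (j:ℤ) := by
    intro j
    rw [X_pow_dvd_iff]
    intro m hm
    simp [slitS, slitF_zero_of_lt m j hm]
  have hdQ : ∀ j : ℕ, X ^ j ∣ Q 0 := by
    intro j
    rw [← hQ0 j]
    have h1 := hdvd j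
    have h2 : X ^ j ∣ slitS ((j:ℤ)+1) := by
      have := hdvd (j+1)
      push_cast at this
      exact (pow_dvd_pow _ (Nat.le_succ j)).trans this
    exact dvd_sub (((dvd_add (h2.trans (dvd_pow_self _ two_ne_zero))
      (h1.trans (dvd_pow_self _ two_ne_zero)))).mul_left _) (h2.mul_left _)
  have hz : Q 0 = 0 := by
    ext1 n
    have := X_pow_dvd_iff.1 (hdQ (n+1)) n (Nat.lt_succ_self n)
    simpa using this
  simp only [hQ] at hz
  push_cast at hz
  linear_combination hz

lemma slit_main : ((1 - X * slitXX) ^ 2 - 4 * X ^ 2) * slitS 0 ^ 2 = (1 - slitTT) ^ 2 := by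
  have h0 : 1 - slitTT = (1 - X * slitXX) * slitS 0 - 2 * X * slitS 1 := by
    linear_combination -slitS_eq_zero
  rw [h0]
  linear_combination (-4 * X) * slit_quadratic

/-! ### Factorisation -/

/-- Power series with polynomial coefficients. -/
abbrev SA := PowerSeries (Polynomial ℚ)

/-- `x ↦ x`. -/
noncomputable def slitHom : SA →+* PowerSeries SLQ := PowerSeries.map Polynomial.toLaurent

/-- `x ↦ 1/x`. -/
noncomputable def slitHom' : SA →+* PowerSeries SLQ :=
  PowerSeries.map ((invert (R := ℚ)).toAlgHom.toRingHom.comp Polynomial.toLaurent)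

lemma toLaurent_coeff_nat (p : Polynomial ℚ) (k : ℕ) :
    (Polynomial.toLaurent p).coeff (k : ℤ) = p.coeff k := by
  rw [coeff_toLaurent]
  exact Finsupp.mapDomain_apply (Nat.castEmbedding (R := ℤ)).injective _ k

lemma toLaurent_coeff_neg (p : Polynomial ℚ) (k : ℤ) (hk : k < 0) :
    (Polynomial.toLaurent p).coeff k = 0 := by
  rw [coeff_toLaurent]
  apply Finsupp.mapDomain_of_notMem_range
  rintro ⟨a, ha⟩
  simp at ha
  omega

lemma exists_toLaurent (f : SLQ) (h : ∀ k < 0, f.coeff k = 0) :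
    ∃ p : Polynomial ℚ, Polynomial.toLaurent p = f := by
  refine ⟨trunc f, LaurentPolynomial.ext fun k => ?_⟩
  rcases lt_or_ge k 0 with hk | hk
  · rw [h k hk, toLaurent_coeff_neg _ _ hk]
  · lift k to ℕ using hk
    rw [toLaurent_coeff_nat]
    rfl

lemma slit_split (f g : SA) (h : slitHom f = slitHom' g) (n : ℕ) :
    (coeff n f).coeff 0 = (coeff n g).coeff 0 ∧
    ∀ k, k ≠ 0 → (coeff n f).coeff k = 0 ∧ (coeff n g).coeff k = 0 := by
  have h1 := congrArg (coeff n) h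
  simp only [slitHom, slitHom', coeff_map] at h1
  have h2 : ∀ i : ℤ, (Polynomial.toLaurent (coeff n f)).coeff i =
      (Polynomial.toLaurent (coeff n g)).coeff (-i) := by
    intro i
    rw [h1]
    exact invert_apply _ i
  refine ⟨?_, fun k hk => ⟨?_, ?_⟩⟩
  · have := h2 ((0:ℕ):ℤ)
    rw [toLaurent_coeff_nat] at this
    rw [this, ← toLaurent_coeff_nat]
    simp
  · have := h2 (k:ℤ)
    rwa [toLaurent_coeff_nat, toLaurent_coeff_neg _ _ (by omega)] at this
  · have := h2 (-(k:ℤ))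
    rw [neg_neg, toLaurent_coeff_nat, toLaurent_coeff_neg _ _ (by omega)] at this
    exact this.symm

end SlitSeries

section SlitFinal

open PowerSeries

/-- The Catalan series over the rationals. -/
noncomputable def slitC : PowerSeries ℚ := PowerSeries.map (Nat.castRingHom ℚ) catalanSeries

/-- The Catalan series at `-t`. -/
noncomputable def slitC' : PowerSeries ℚ := evalNegHom slitC

lemma slitC_eq : slitC = 1 + X * slitC ^ 2 := by
  have := congrArg (PowerSeries.map (Nat.castRingHom ℚ)) catalanSeries_sq_mul_X_add_one
  simp only [map_add, map_mul, map_pow, map_one, PowerSeries.map_X] at this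
  unfold slitC
  linear_combination -this

lemma slitC'_eq : slitC' = 1 - X * slitC' ^ 2 := by
  have := congrArg evalNegHom slitC_eq
  simp only [map_add, map_mul, map_pow, map_one, evalNegHom_X] at this
  unfold slitC'
  linear_combination this

lemma slitC_coeff (n : ℕ) : coeff n slitC = catalan n := by
  simp [slitC]

/-- Constants in `x`. -/
noncomputable def slitE : PowerSeries ℚ →+* SA := PowerSeries.map Polynomial.C

/-- The variable `x`. -/
noncomputable def slitx : SA := PowerSeries.C Polynomial.X

/-- Constant coefficient in `x`. -/
noncomputable def slitEv : SA →+* PowerSeries ℚ := PowerSeries.map Polynomial.constantCoeff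

/-- Coefficient of `x`. -/
noncomputable def slitD (f : SA) : PowerSeries ℚ := PowerSeries.mk fun n => (coeff n f).coeff 1

lemma slitEv_coeff (f : SA) (n : ℕ) : coeff n (slitEv f) = (coeff n f).coeff 0 := by
  simp [slitEv]

lemma slitD_mul (f g : SA) : slitD (f * g) = slitD f * slitEv g + slitEv f * slitD g := by
  ext1 n
  simp only [slitD, coeff_mk, map_add, coeff_mul, slitEv_coeff, Polynomial.finsetSum_coeff,
    ← Finset.sum_add_distrib]
  refine Finset.sum_congr rfl fun p _ => ?_
  rw [Polynomial.mul_coeff_one]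
  ring

lemma slitD_sub (f g : SA) : slitD (f - g) = slitD f - slitD g := by
  ext1 n
  simp [slitD]

lemma slitD_E (f : PowerSeries ℚ) : slitD (slitE f) = 0 := by
  ext1 n
  simp [slitD, slitE]

lemma slitD_one : slitD 1 = 0 := by
  have := slitD_E 1
  rwa [map_one] at this

lemma slitD_x : slitD slitx = 1 := by
  ext1 n
  simp only [slitD, slitx, coeff_mk, coeff_C, coeff_one]
  split_ifs <;> simp

lemma slitEv_E (f : PowerSeries ℚ) : slitEv (slitE f) = f := by
  ext1 n
  simp [slitEv, slitE]

lemma slitEv_x : slitEv slitx = 0 := by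
  simp [slitEv, slitx]

/-- The factor `P(x)`. -/
noncomputable def slitP : SA := (1 - slitE (slitC - 1) * slitx) * (1 - slitE (1 - slitC') * slitx)

lemma slitEv_P : slitEv slitP = 1 := by
  simp [slitP, slitEv_x]

lemma slitD_P : slitD slitP = -(slitC - slitC') := by
  simp only [slitP, slitD_mul, slitD_sub, slitD_one, slitD_E, slitD_x, slitEv_x, slitEv_E,
    map_sub, map_mul, map_one]
  ring

lemma slitC_const : constantCoeff slitC = 1 := by
  rw [slitC_eq]; simp

lemma slitC'_const : constantCoeff slitC' = 1 := by
  rw [slitC'_eq]; simp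

lemma slitP_unit : IsUnit slitP := by
  rw [PowerSeries.isUnit_iff_constantCoeff]
  have h1 : constantCoeff (slitE (slitC - 1)) = 0 := by
    rw [← coeff_zero_eq_constantCoeff_apply, slitE, coeff_map, coeff_zero_eq_constantCoeff_apply,
      map_sub, slitC_const]
    simp
  have h2 : constantCoeff (slitE (1 - slitC')) = 0 := by
    rw [← coeff_zero_eq_constantCoeff_apply, slitE, coeff_map, coeff_zero_eq_constantCoeff_apply,
      map_sub, slitC'_const]
    simp
  have h3 : constantCoeff slitP = (1 - constantCoeff (slitE (slitC - 1)) * constantCoeff slitx) *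
      (1 - constantCoeff (slitE (1 - slitC')) * constantCoeff slitx) := by
    simp only [slitP, map_mul, map_sub constantCoeff, map_one constantCoeff]
  rw [h3, h1, h2]
  simp

lemma slitHom_E (f : PowerSeries ℚ) : slitHom (slitE f) = slitHom' (slitE f) := by
  ext1 n
  simp only [slitHom, slitHom', slitE, coeff_map]
  simp

lemma slitHom_x_mul : slitHom slitx * slitHom' slitx = 1 := by
  have h1 : slitHom slitx = PowerSeries.C (T 1) := by simp [slitHom, slitx]
  have h2 : slitHom' slitx = PowerSeries.C (T (-1)) := by simp [slitHom', slitx]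
  rw [h1, h2, ← map_mul, ← T_add]
  simp

lemma slitXX_eq : slitXX = slitHom slitx + slitHom' slitx := by
  have h1 : slitHom slitx = PowerSeries.C (T 1) := by simp [slitHom, slitx]
  have h2 : slitHom' slitx = PowerSeries.C (T (-1)) := by simp [slitHom', slitx]
  rw [h1, h2, slitXX, map_add]

lemma slit_factor : ((1 - X * slitXX) ^ 2 - 4 * X ^ 2) * slitHom' (slitE (slitC * slitC')) ^ 2 =
    slitHom slitP * slitHom' slitP := by
  have ha := congrArg (fun f => slitHom' (slitE f)) slitC_eq
  have hb := congrArg (fun f => slitHom' (slitE f)) slitC'_eq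
  have hX : slitHom' (slitE X) = X := by simp [slitHom', slitE]
  simp only [map_add, map_sub, map_mul, map_pow, map_one, hX] at ha hb
  have hzw := slitHom_x_mul
  simp only [slitP, map_mul, map_sub, map_one, slitHom_E]
  rw [slitXX_eq]
  generalize slitHom' (slitE slitC) = a at *
  generalize slitHom' (slitE slitC') = b at *
  generalize slitHom slitx = z at *
  generalize slitHom' slitx = w at *
  have h1 : (1 - X * (z + w) - 2 * X) * a ^ 2 = (1 - (a - 1) * z) * (1 - (a - 1) * w) := by
    linear_combination (z + w + 2) * ha - (a - 1) ^ 2 * hzw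
  have h2 : (1 - X * (z + w) + 2 * X) * b ^ 2 = (1 - (1 - b) * z) * (1 - (1 - b) * w) := by
    linear_combination -(z + w - 2) * hb - (1 - b) ^ 2 * hzw
  calc _ = ((1 - X * (z + w) - 2 * X) * a ^ 2) * ((1 - X * (z + w) + 2 * X) * b ^ 2) := by ring
    _ = _ := by rw [h1, h2]; ring

lemma slitF_zero_coeff_neg (n : ℕ) (k : ℤ) (hk : k < 0) : (slitF n 0).coeff k = 0 := by
  rw [slitF_coeff]
  cases n with
  | zero => rw [slitCount_zero, if_neg (by omega)]; simp
  | succ n => rw [slitCount_succ_mem _ _ _ ⟨rfl, hk.le⟩]; simp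

lemma slitTau_coeff_pos (n : ℕ) (k : ℤ) (hk : 0 < k) : (slitTau n).coeff k = 0 := by
  cases n with
  | zero => simp [slitTau]
  | succ n => simp [slitTau, slitF, slitPos_coeff, hk]

lemma exists_slit_s0 : ∃ s : SA, slitHom s = slitS 0 := by
  choose p hp using fun n => exists_toLaurent (slitF n 0) (slitF_zero_coeff_neg n)
  refine ⟨PowerSeries.mk p, ?_⟩
  ext1 n
  simp [slitHom, slitS, hp]

lemma exists_slit_tau : ∃ s : SA, slitHom' s = slitTT := by
  choose p hp using fun n => exists_toLaurent (invert (slitTau n)) (fun k hk => by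
    rw [invert_apply]; exact slitTau_coeff_pos n _ (by omega))
  refine ⟨PowerSeries.mk p, ?_⟩
  ext1 n
  simp only [slitHom', slitTT, coeff_map, coeff_mk]
  have h := involutive_invert (slitTau n)
  rw [← hp n] at h
  exact h

/-- The generating function of walks ending at `(i,j)`. -/
noncomputable def slitGF (i j : ℤ) : PowerSeries ℚ :=
  PowerSeries.mk fun n => (slitCount sqSteps i j n : ℚ)

lemma slitTau_coeff_zero (n : ℕ) : (slitTau (n+1)).coeff 0 =
    slitCount sqSteps 1 0 n + 2 * slitCount sqSteps 0 1 n := by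
  simp only [slitTau, AddMonoidAlgebra.coeff_sub, Finsupp.sub_apply, slitG_coeff]
  rw [show (0:ℤ) - 1 = -1 by ring, show (0:ℤ) + 1 = 1 by ring, slitF_symm n 1,
    slitF_zero_coeff_neg n (-1) (by norm_num), slitF_coeff, slitF_coeff, slitF_coeff,
    slitCount_succ_mem 0 0 n ⟨rfl, le_rfl⟩]
  push_cast
  ring

lemma slit_key : 2 * slitGF 1 0 = slitC - slitC' ∧
    (slitC * slitC' * (1 - X * (slitGF 1 0 + 2 * slitGF 0 1))) ^ 2 = 1 := by
  obtain ⟨s, hs⟩ := exists_slit_s0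
  obtain ⟨τ, hτ⟩ := exists_slit_tau
  obtain ⟨q, hq⟩ := slitP_unit.exists_right_inv
  have hscoeff : ∀ n k : ℕ, (coeff n s).coeff k = slitCount sqSteps k 0 n := by
    intro n k
    have := congrArg (fun f => (coeff n f).coeff (k:ℤ)) hs
    simp only [slitHom, coeff_map, toLaurent_coeff_nat, slitS, coeff_mk, slitF_coeff] at this
    exact this
  have hsEv : slitEv s = 1 := by
    ext1 n
    rw [slitEv_coeff, hscoeff]
    cases n with
    | zero => rw [Nat.cast_zero, slitCount_zero]; simp
    | succ n => rw [Nat.cast_zero, slitCount_succ_mem 0 0 n ⟨rfl, le_rfl⟩]; simp [coeff_one]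
  have hsD : slitD s = slitGF 1 0 := by
    ext1 n
    simp only [slitD, slitGF, coeff_mk, hscoeff, Nat.cast_one]
  have hτEv : slitEv τ = X * (slitGF 1 0 + 2 * slitGF 0 1) := by
    have hc : ∀ n, (coeff n τ).coeff 0 = (slitTau n).coeff 0 := by
      intro n
      have h := congrArg (fun f => (coeff n f).coeff 0) hτ
      simp only [slitHom', coeff_map, slitTT, coeff_mk] at h
      rw [← h, ← toLaurent_coeff_nat]
      exact (invert_apply (Polynomial.toLaurent (coeff n τ)) 0).symm
    ext1 n
    rw [slitEv_coeff, hc]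
    cases n with
    | zero => simp [slitTau]
    | succ n =>
      rw [slitTau_coeff_zero, coeff_succ_X_mul, two_mul (slitGF 0 1), map_add, map_add]
      simp only [slitGF, coeff_mk]
      ring
  have hmain : slitHom (s ^ 2 * slitP) =
      slitHom' (slitE (slitC * slitC') ^ 2 * (1 - τ) ^ 2 * q) := by
    have h1 := slit_main
    have h2 := slit_factor
    have h3 := congrArg slitHom' hq
    rw [← hs, ← hτ] at h1
    simp only [map_mul, map_pow, map_sub, map_one] at h1 h2 h3 ⊢
    linear_combination (slitHom' (slitE slitC) * slitHom' (slitE slitC')) ^ 2 * slitHom' q * h1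
      - slitHom s ^ 2 * slitHom' q * h2 - slitHom s ^ 2 * slitHom slitP * h3
  have hsplit := slit_split _ _ hmain
  have hD : slitD (s ^ 2 * slitP) = 0 := by
    ext1 n
    simp only [slitD, coeff_mk]
    rw [((hsplit n).2 1 one_ne_zero).1]
    simp
  have hEv : slitEv (s ^ 2 * slitP) =
      slitEv (slitE (slitC * slitC') ^ 2 * (1 - τ) ^ 2 * q) := by
    ext1 n
    rw [slitEv_coeff, slitEv_coeff]
    exact (hsplit n).1
  have hqEv : slitEv q = 1 := by
    have := congrArg slitEv hq
    rwa [map_mul, slitEv_P, one_mul, map_one] at this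
  constructor
  · rw [pow_two, slitD_mul, slitD_mul, slitD_P, map_mul, hsEv, hsD, slitEv_P] at hD
    linear_combination hD
  · simp only [map_mul, map_pow, map_sub, map_one, slitEv_P, hsEv, slitEv_E, hqEv, hτEv] at hEv
    linear_combination -hEv

lemma slitGF01_eq : slitGF 0 1 = X + 4 * X * slitGF 0 1 ^ 2 := by
  obtain ⟨h1, h2⟩ := slit_key
  have h3 : slitC * slitC' * (1 - X * (slitGF 1 0 + 2 * slitGF 0 1)) = 1 := by
    rcases mul_self_eq_one_iff.1 ((pow_two _).symm.trans h2) with h | h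
    · exact h
    · exfalso
      have := congrArg constantCoeff h
      simp [slitC_const, slitC'_const] at this
      norm_num at this
  have hc := slitC_eq
  have hc' := slitC'_eq
  generalize slitC = c at *
  generalize slitC' = d at *
  generalize slitGF 1 0 = u at *
  generalize slitGF 0 1 = v at *
  have e1 : c * (1 - X * c) = 1 := by linear_combination hc
  have e2 : d * (1 + X * d) = 1 := by linear_combination hc'
  have h4 : 1 - X * (u + 2 * v) = (1 - X * c) * (1 + X * d) := by
    linear_combination (1 - X * c) * (1 + X * d) * h3 - (1 - X * (u + 2 * v)) * d * (1 + X * d) * e1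
      - (1 - X * (u + 2 * v)) * e2
  have h5 : X * (u + 2 * v) = X * (c - d + X * c * d) := by linear_combination -h4
  have h6 : u + 2 * v = c - d + X * c * d := mul_left_cancel₀ PowerSeries.X_ne_zero h5
  have h7 : 4 * v = c - d + 2 * X * c * d := by linear_combination 2 * h6 - h1
  have h8 : 16 * v = 16 * (X + 4 * X * v ^ 2) := by
    have : 16 * (X + 4 * X * v ^ 2) = 16 * X + 4 * X * (4 * v) ^ 2 := by ring
    rw [this, show 16 * v = 4 * (4 * v) by ring, h7]
    linear_combination 4 * (1 + 4 * X * d + 4 * X ^ 2 * d ^ 2) * hc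
      - 4 * (1 - 4 * X * c + 4 * X * (c - 1)) * hc'
  have h16 : (16 : PowerSeries ℚ) ≠ 0 := by
    intro h
    have h9 := congrArg constantCoeff h
    rw [map_ofNat, map_zero] at h9
    norm_num at h9
  exact mul_left_cancel₀ h16 h8

/-- The claimed generating function. -/
noncomputable def slitB : PowerSeries ℚ := X * expand 2 two_ne_zero (rescale 4 slitC)

lemma slitB_eq : slitB = X + 4 * X * slitB ^ 2 := by
  have h := congrArg (fun f => expand 2 two_ne_zero (rescale (4:ℚ) f)) slitC_eq
  have hX : expand 2 two_ne_zero (rescale (4:ℚ) X) = 4 * X ^ 2 := by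
    rw [rescale_X, map_mul, expand_X, expand_C]
    rfl
  simp only [map_add, map_mul, map_pow, map_one, hX] at h
  unfold slitB
  linear_combination X * h

lemma slitB_coeff (n : ℕ) : coeff (2 * n + 1) slitB = 4 ^ n * catalan n := by
  rw [slitB, coeff_succ_X_mul, coeff_expand_mul, coeff_rescale, slitC_coeff]

lemma slitGF01_eq_B : slitGF 0 1 = slitB := by
  have h1 := slitGF01_eq
  have h2 := slitB_eq
  have h : (slitGF 0 1 - slitB) * (1 - X * (4 * (slitGF 0 1 + slitB))) = 0 := by
    linear_combination h1 - h2
  rcases mul_eq_zero.1 h with h | h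
  · exact sub_eq_zero.1 h
  · exfalso
    have := congrArg constantCoeff h
    simp at this

end SlitFinal

/-- `a_{0,1}(2n+1) = 4ⁿ·Cₙ` and `a_{0,1}(2n) = 0`. -/
theorem slit_count_0_1 (n : ℕ) :
    slitCount sqSteps 0 1 (2 * n + 1) = 4 ^ n * catalan n
    ∧ slitCount sqSteps 0 1 (2 * n) = 0 := by
  constructor
  · have h := slitB_coeff n
    rw [← slitGF01_eq_B, slitGF, PowerSeries.coeff_mk] at h
    exact_mod_cast h
  · apply slitCount_parity
    push_cast
    omega
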